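/- arXiv:math/0110207 — 3 statements merged into one kernel-verified Lean document; each statement's English description precedes it below -/
import Mathlib

section
/- Let G be a finite group and θ a U(1)-valued 2-cocycle on G. Define ρ : G × G → U(1) by ρ(g,h) = θ(g,h)·θ(h, h⁻¹gh)⁻¹. Then ρ is a morphism of groupoids from the inertia groupoid ∧Ḡ of the one-object groupoid Ḡ to U(1); concretely, for all g, v, w ∈ G one has ρ(g, 1) = 1 and ρ(g, vw) = ρ(g, v)·ρ(v⁻¹gv, w). -/
/-!
Put `k = v⁻¹gv` and `l = w⁻¹kw`, so that `gv = vk` and `kw = wl`. The cocycle identities at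
`(g, v, w)`, `(v, k, w)` and `(v, w, l)` share the values `θ(v, w)`, `θ(gv, w) = θ(vk, w)` and
`θ(v, kw) = θ(v, wl)`; these cancel when the three are combined, and what is left is the
multiplicativity of `ρ`. The identity `ρ(g, 1) = 1` holds because `θ(g, 1) = θ(1, 1) = θ(1, g)`.
-/

/-- Elimination of the shared values `X`, `V`, `Y` from three relations in an abelian group. -/
theorem cocycle_elim {A : Type*} [CommGroup A] {a b c d P Q X V Y : A}
    (h1 : a * X = P * V) (h2 : b * X = Y * c) (h3 : V * Q = Y * d) :
    P * Q⁻¹ = a * b⁻¹ * (c * d⁻¹) := by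
  have key : P * (b * d) = a * c * Q := by
    apply mul_right_cancel (b := V * (X * Y))
    calc P * (b * d) * (V * (X * Y)) = (P * V) * (b * X) * (Y * d) := by ac_rfl
      _ = (a * X) * (Y * c) * (V * Q) := by rw [h1, h2, h3]
      _ = a * c * Q * (V * (X * Y)) := by ac_rfl
  rw [mul_mul_mul_comm, ← mul_inv, ← div_eq_mul_inv, ← div_eq_mul_inv, div_eq_div_iff_mul_eq_mul]
  exact key

/-- Let `G` be a finite group and `θ` a `U(1)`-valued 2-cocycle on `G`.
Define `ρ (g,h) = θ(g,h) · θ(h, h⁻¹gh)⁻¹`.  Then `ρ` is a morphism of groupoids from the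
inertia groupoid of the one-object groupoid of `G` to `U(1)`; concretely, for all
`g v w : G` one has `ρ(g,1) = 1` and `ρ(g, vw) = ρ(g,v) · ρ(v⁻¹gv, w)`. -/
theorem stmt0 (G : Type*) [Group G] [Finite G]
    (θ : G → G → Circle)
    (hθ : ∀ a b c : G, θ a b * θ (a * b) c = θ a (b * c) * θ b c)
    (ρ : G → G → Circle)
    (hρ : ∀ g h : G, ρ g h = θ g h * (θ h (h⁻¹ * g * h))⁻¹) :
    ∀ g v w : G, ρ g 1 = 1 ∧ ρ g (v * w) = ρ g v * ρ (v⁻¹ * g * v) w := by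
  intro g v w
  constructor
  · have h1 : θ g 1 = θ 1 1 := by simpa using hθ g 1 1
    have h2 : θ 1 1 = θ 1 g := by simpa using hθ 1 1 g
    rw [hρ, inv_one, one_mul, mul_one, h1, h2, mul_inv_cancel]
  · rw [hρ, hρ, hρ]
    have hl : (v * w)⁻¹ * g * (v * w) = w⁻¹ * (v⁻¹ * g * v) * w := by group
    rw [hl]
    have e1 : v * (v⁻¹ * g * v) = g * v := by group
    have e2 : w * (w⁻¹ * (v⁻¹ * g * v) * w) = v⁻¹ * g * v * w := by group
    have h2 := hθ v (v⁻¹ * g * v) w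
    have h3 := hθ v w (w⁻¹ * (v⁻¹ * g * v) * w)
    rw [e1] at h2
    rw [e2] at h3
    exact cocycle_elim (hθ g v w) h2 h3
end

section
/- Let G be a finite group, θ a U(1)-valued 2-cocycle on G, and g ∈ G. Then the map h ↦ ρ(g,h) = θ(g,h)·θ(h,g)⁻¹ is a group homomorphism from the centralizer C(g) to U(1); that is, it defines a one-dimensional representation of C(g). (Note that for h ∈ C(g) one has h⁻¹gh = g, so this agrees with ρ(g,h) = θ(g,h)·θ(h, h⁻¹gh)⁻¹.) -/
/-! Multiplicativity of `ρ(g, ·)` on `C(g)` follows from the cocycle identity at the triples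
`(g, h, k)`, `(h, g, k)` and `(h, k, g)`: as `g` commutes with `h` and `k`, the auxiliary values
`θ(h, k)`, `θ(gh, k)` and `θ(h, gk)` each occur twice and cancel in the quotient. -/

/-- Let `G` be a finite group, `θ` a `U(1)`-valued 2-cocycle on `G`, and
`g ∈ G`.  Then `h ↦ ρ(g,h) = θ(g,h) · θ(h,g)⁻¹` is a group homomorphism from the
centralizer `C(g)` to `U(1)`, i.e. a one-dimensional representation of `C(g)`. -/
theorem stmt1 (G : Type*) [Group G] [Finite G]
    (θ : G → G → Circle)
    (hθ : ∀ a b c : G, θ a b * θ (a * b) c = θ a (b * c) * θ b c)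
    (g : G) :
    ∃ f : Subgroup.centralizer {g} →* Circle,
      ∀ h : Subgroup.centralizer {g}, f h = θ g (h : G) * (θ (h : G) g)⁻¹ := by
  refine ⟨MonoidHom.mk' (fun h => θ g (h : G) * (θ (h : G) g)⁻¹) ?_, fun _ => rfl⟩
  rintro ⟨h, hh⟩ ⟨k, hk⟩
  have ch : h * g = g * h := (Subgroup.mem_centralizer_singleton_iff.mp hh)
  have ck : k * g = g * k := (Subgroup.mem_centralizer_singleton_iff.mp hk)
  have e1 := hθ g h k
  have e2 := hθ h g k
  have e3 := hθ h k g
  rw [ch] at e2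
  rw [ck] at e3
  simp only [MulMemClass.mk_mul_mk, ← div_eq_mul_inv]
  rw [div_mul_div_comm, div_eq_div_iff_mul_eq_mul]
  -- Multiply by the auxiliary cocycle values, so that the three identities apply.
  apply mul_right_cancel (b := θ h k * θ (g * h) k * θ h (g * k))
  calc θ g (h * k) * (θ h g * θ k g) * (θ h k * θ (g * h) k * θ h (g * k))
      = (θ g (h * k) * θ h k) * (θ h g * θ (g * h) k) * (θ h (g * k) * θ k g) := by ac_rfl
    _ = (θ g h * θ (g * h) k) * (θ h (g * k) * θ g k) * (θ h k * θ (h * k) g) := by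
        rw [e1, e2, e3]
    _ = θ g h * θ g k * θ (h * k) g * (θ h k * θ (g * h) k * θ h (g * k)) := by ac_rfl
end

section
/- Let Γ be a groupoid and θ a U(1)-valued 2-cocycle on Γ. For an arrow a : x → x of Γ with equal source and target and an arrow v : x → y of Γ, set ρ(a, v) = θ(a, v)·θ(v, v⁻¹av)⁻¹. Then ρ(a, id_x) = 1; for arrows v : x → y and w : y → z one has ρ(a, vw) = ρ(a, v)·ρ(v⁻¹av, w); and ρ(a, v)⁻¹ = ρ(v⁻¹av, v⁻¹). Hence ρ defines a functor (a morphism of groupoids) from the inertia groupoid ∧Γ to the one-object groupoid with morphism group U(1). -/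
/-!
For arrows `a : x ⟶ x` and `b : y ⟶ y` with `a ≫ v = v ≫ b`, the quotient
`θ(a, v) / θ(v, b)` is the transgression of `θ` to the inertia groupoid. Its multiplicativity in
`v` (`transgression_mul`) is the alternating product of the cocycle identities for the composable
triples `(a, v, w)`, `(v, b, w)` and `(v, w, c)`, where `b`, `c` are the successive conjugates of
`a`. Its value at an identity is `1` because `θ(a, 𝟙) = θ(𝟙, 𝟙) = θ(𝟙, a)`, which is the cocycle
identity for `(a, 𝟙, 𝟙)` and `(𝟙, 𝟙, a)`. The formula for `ρ(a, v)⁻¹` is multiplicativity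
applied to `v ≫ v⁻¹ = 𝟙`, and functoriality restates the first two properties.
-/

open CategoryTheory

/-- The inertia groupoid `∧Γ` of a groupoid `Γ`: objects are the arrows `a : x ⟶ x` of `Γ`
with equal source and target, and morphisms from `a : x ⟶ x` to `b : y ⟶ y` are the
arrows `v : x ⟶ y` of `Γ` with `a ≫ v = v ≫ b`. -/
def Inertia (Γ : Type*) [Groupoid Γ] : Type _ := Σ x : Γ, x ⟶ x

instance (Γ : Type*) [Groupoid Γ] : Category (Inertia Γ) where
  Hom a b := {v : a.1 ⟶ b.1 // a.2 ≫ v = v ≫ b.2}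
  id a := ⟨𝟙 a.1, by simp⟩
  comp {a b c} f g := ⟨f.1 ≫ g.1, by
    rw [← Category.assoc, f.2, Category.assoc, g.2, Category.assoc]⟩
  id_comp f := Subtype.ext (Category.id_comp _)
  comp_id f := Subtype.ext (Category.comp_id _)
  assoc f g h := Subtype.ext (Category.assoc _ _ _)

/-- Multiplicativity of the transgression, with the conjugates `b = v⁻¹av` and `c = w⁻¹bw`
described by the equations `av = vb` and `bw = wc`, so that no inverses occur. -/
theorem transgression_mul {C : Type*} [Category C] {A : Type*} [CommGroup A]
    (θ : ∀ {x y z : C}, (x ⟶ y) → (y ⟶ z) → A)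
    (hθ : ∀ {x y z w : C} (a : x ⟶ y) (b : y ⟶ z) (c : z ⟶ w),
      θ a b * θ (a ≫ b) c = θ a (b ≫ c) * θ b c)
    {x y z : C} {a : x ⟶ x} {b : y ⟶ y} {c : z ⟶ z} {v : x ⟶ y} {w : y ⟶ z}
    (hv : a ≫ v = v ≫ b) (hw : b ≫ w = w ≫ c) :
    θ a (v ≫ w) * (θ (v ≫ w) c)⁻¹ = θ a v * (θ v b)⁻¹ * (θ b w * (θ w c)⁻¹) := by
  have h₁ := eq_mul_inv_of_mul_eq (hθ a v w).symm
  have h₂ := eq_inv_mul_of_mul_eq (hθ v b w)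
  have h₃ := eq_inv_mul_of_mul_eq (hθ v w c)
  rw [h₁, h₃, hv, h₂, hw]
  simp only [mul_inv_rev, inv_inv]
  generalize θ a v = p, θ v b = q, θ b w = r, θ w c = s, θ v w = t, θ v (w ≫ c) = u
  calc _ = p * q⁻¹ * (r * s⁻¹) * (u * u⁻¹) * (t * t⁻¹) := by
        simp only [mul_assoc, mul_comm, mul_left_comm]
    _ = _ := by simp

/-- Let `Γ` be a groupoid and `θ` a `U(1)`-valued 2-cocycle on `Γ`.
For an arrow `a : x ⟶ x` and an arrow `v : x ⟶ y` set
`ρ(a,v) = θ(a,v) · θ(v, v⁻¹av)⁻¹`.  Then `ρ(a, id_x) = 1`;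
`ρ(a, v ≫ w) = ρ(a,v) · ρ(v⁻¹av, w)`; and `ρ(a,v)⁻¹ = ρ(v⁻¹av, v⁻¹)`.
Hence `ρ` defines a functor from the inertia groupoid `∧Γ` to the one-object groupoid
with morphism group `U(1)`. -/
theorem stmt2 (Γ : Type*) [Groupoid Γ]
    (θ : ∀ {x y z : Γ}, (x ⟶ y) → (y ⟶ z) → Circle)
    (hθ : ∀ {x y z w : Γ} (a : x ⟶ y) (b : y ⟶ z) (c : z ⟶ w),
      θ a b * θ (a ≫ b) c = θ a (b ≫ c) * θ b c)
    (ρ : ∀ {x y : Γ}, (x ⟶ x) → (x ⟶ y) → Circle)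
    (hρ : ∀ {x y : Γ} (a : x ⟶ x) (v : x ⟶ y),
      ρ a v = θ a v * (θ v (Groupoid.inv v ≫ a ≫ v))⁻¹) :
    (∀ (x : Γ) (a : x ⟶ x), ρ a (𝟙 x) = 1) ∧
    (∀ (x y z : Γ) (a : x ⟶ x) (v : x ⟶ y) (w : y ⟶ z),
      ρ a (v ≫ w) = ρ a v * ρ (Groupoid.inv v ≫ a ≫ v) w) ∧
    (∀ (x y : Γ) (a : x ⟶ x) (v : x ⟶ y),
      (ρ a v)⁻¹ = ρ (Groupoid.inv v ≫ a ≫ v) (Groupoid.inv v)) ∧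
    Nonempty { F : Inertia Γ ⥤ SingleObj Circle //
      ∀ (a b : Inertia Γ) (v : a ⟶ b), F.map v = ρ a.2 v.1 } := by
  have conj : ∀ {x y : Γ} (a : x ⟶ x) (v : x ⟶ y),
      a ≫ v = v ≫ Groupoid.inv v ≫ a ≫ v := fun a v => by simp
  have one : ∀ (x : Γ) (a : x ⟶ x), ρ a (𝟙 x) = 1 := by
    intro x a
    have h₁ : θ a (𝟙 x) = θ (𝟙 x) (𝟙 x) := by simpa using hθ a (𝟙 x) (𝟙 x)
    have h₂ : θ (𝟙 x) (𝟙 x) = θ (𝟙 x) a := by simpa using hθ (𝟙 x) (𝟙 x) a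
    have e : Groupoid.inv (𝟙 x) ≫ a ≫ 𝟙 x = a := by simp
    rw [hρ, e, h₁, h₂, mul_inv_cancel]
  have mul : ∀ (x y z : Γ) (a : x ⟶ x) (v : x ⟶ y) (w : y ⟶ z),
      ρ a (v ≫ w) = ρ a v * ρ (Groupoid.inv v ≫ a ≫ v) w := by
    intro x y z a v w
    have e : Groupoid.inv (v ≫ w) ≫ a ≫ v ≫ w =
        Groupoid.inv w ≫ (Groupoid.inv v ≫ a ≫ v) ≫ w := by simp
    rw [hρ, hρ, hρ, e]
    exact transgression_mul θ hθ (conj a v) (conj _ w)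
  refine ⟨one, mul, fun x y a v => ?_, ⟨⟨
    { obj := fun _ => SingleObj.star Circle
      map := fun {a b} v => ρ a.2 v.1
      map_id := fun a => one a.1 a.2
      map_comp := fun {a b c} v w => ?_ }, fun _ _ _ => rfl⟩⟩⟩
  · rw [inv_eq_iff_mul_eq_one, ← mul, Groupoid.comp_inv, one]
  · have e : Groupoid.inv v.1 ≫ a.2 ≫ v.1 = b.2 := by rw [v.2]; simp
    -- Composition in `SingleObj` is multiplication in the reverse order.
    calc ρ a.2 (v.1 ≫ w.1) = ρ a.2 v.1 * ρ b.2 w.1 := by rw [mul, e]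
      _ = ρ b.2 w.1 * ρ a.2 v.1 := mul_comm _ _
end
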